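/- For every positive integer h and every integer m with 0 ≤ m < 2^h, there exists a finite sequence u_1, …, u_{h'} of pairwise disjoint dyadic intervals in [0,1) with h' ≤ 2h such that: (a) each u_i is a dyadic interval of some depth ℓ_i ≤ h; (b) the union u_1 ∪ ⋯ ∪ u_{h'} equals [0, m·2^{-h}); (c) each u_i has a right neighbor at its depth, i.e., writing u_i = [a_i, a_i + 2^{-ℓ_i}), we have a_i + 2·2^{-ℓ_i} ≤ 1; and (d) for each depth ℓ, at most two indices i satisfy ℓ_i = ℓ. -/

import Mathlib

/-- The dyadic interval of depth `j` and index `m`: `[m·2^{-j}, (m+1)·2^{-j}) ⊂ [0,1)`. -/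
def dyadic (j m : ℕ) : Set ℝ :=
  Set.Ico ((m : ℝ) / 2 ^ j) (((m : ℝ) + 1) / 2 ^ j)

lemma prefix_aux : ∀ h m : ℕ, m < 2 ^ h →
    ∃ (S : Finset ℕ) (f : ℕ → ℕ), S ⊆ Finset.Icc 1 h ∧ (∀ l ∈ S, f l + 2 ≤ 2 ^ l) ∧
      (∀ l ∈ S, ∀ k ∈ S, l ≠ k → Disjoint (dyadic l (f l)) (dyadic k (f k))) ∧
      (⋃ l ∈ S, dyadic l (f l)) = Set.Ico (0 : ℝ) ((m : ℝ) / 2 ^ h) := by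
  intro h
  induction h with
  | zero =>
    intro m hm
    have : m = 0 := by simpa using hm
    subst this
    exact ⟨∅, fun _ => 0, by simp⟩
  | succ h ih =>
    intro m hm
    have hp : 2 ^ (h + 1) = 2 * 2 ^ h := by ring
    obtain ⟨S, f, hS, h1, h2, h3⟩ := ih (m / 2) (by omega)
    have hS' : ∀ l ∈ S, 1 ≤ l ∧ l ≤ h := fun l hl => by simpa using hS hl
    obtain ⟨q, hq | hq⟩ := m.even_or_odd'
    · have e : m / 2 = q := by omega
      refine ⟨S, f, fun l hl => ?_, h1, h2, ?_⟩
      · have := hS' l hl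
        simp; omega
      · rw [h3, e, hq]
        congr 1
        push_cast
        rw [pow_succ]
        field_simp
    · have e : m / 2 = q := by omega
      rw [e] at h3
      have e2 : (((2 * q : ℕ) : ℝ)) / 2 ^ (h + 1) = (q : ℝ) / 2 ^ h := by
        push_cast
        rw [pow_succ]
        field_simp
      have hd : dyadic (h + 1) (2 * q) = Set.Ico ((q : ℝ) / 2 ^ h) ((m : ℝ) / 2 ^ (h + 1)) := by
        rw [dyadic, e2, hq]
        push_cast
        rfl
      have hle : (q : ℝ) / 2 ^ h ≤ (m : ℝ) / 2 ^ (h + 1) := by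
        rw [← e2, hq]
        gcongr
        omega
      have hne : ∀ l ∈ S, l ≠ h + 1 := fun l hl => by have := hS' l hl; omega
      have hup : ∀ l ∈ S, Function.update f (h + 1) (2 * q) l = f l := fun l hl =>
        Function.update_of_ne (hne l hl) _ _
      have hdis : ∀ l ∈ S, Disjoint (dyadic l (f l)) (dyadic (h + 1) (2 * q)) := by
        intro l hl
        have hsub : dyadic l (f l) ⊆ Set.Ico (0 : ℝ) ((q : ℝ) / 2 ^ h) := by
          rw [← h3]
          exact Set.subset_biUnion_of_mem (u := fun l => dyadic l (f l)) hl
        rw [Set.disjoint_left]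
        intro x hx hx'
        rw [hd] at hx'
        exact absurd (hsub hx).2 (not_lt.mpr hx'.1)
      refine ⟨insert (h + 1) S, Function.update f (h + 1) (2 * q), ?_, ?_, ?_, ?_⟩
      · intro l hl
        rcases Finset.mem_insert.mp hl with rfl | hl
        · simp
        · have := hS' l hl
          simp; omega
      · intro l hl
        rcases Finset.mem_insert.mp hl with rfl | hl
        · simp; omega
        · rw [hup l hl]; exact h1 l hl
      · intro l hl k hk hlk
        rcases Finset.mem_insert.mp hl with rfl | hl <;>
          rcases Finset.mem_insert.mp hk with rfl | hk
        · exact absurd rfl hlk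
        · rw [hup k hk, Function.update_self]
          exact (hdis k hk).symm
        · rw [hup l hl, Function.update_self]
          exact hdis l hl
        · rw [hup l hl, hup k hk]
          exact h2 l hl k hk hlk
      · rw [Finset.set_biUnion_insert, Function.update_self, hd]
        have : (⋃ l ∈ S, dyadic l (Function.update f (h + 1) (2 * q) l))
            = ⋃ l ∈ S, dyadic l (f l) :=
          Set.iUnion₂_congr fun l hl => by rw [hup l hl]
        rw [this, h3, Set.union_comm, Set.Ico_union_Ico_eq_Ico (by positivity) hle]

/-- Balanced prefix cover: for every `0 ≤ m < 2^h`, the interval `[0, m·2^{-h})` is a disjoint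
union of at most `2h` dyadic intervals of depth at most `h`, each having a right neighbor at
its depth, with at most two intervals per depth. -/
theorem balanced_prefix_cover :
    ∀ h : ℕ, 0 < h → ∀ m : ℕ, m < 2 ^ h →
      ∃ h' : ℕ, h' ≤ 2 * h ∧
        ∃ ℓ idx : Fin h' → ℕ,
          (∀ i, ℓ i ≤ h) ∧
          (∀ i, idx i + 2 ≤ 2 ^ (ℓ i)) ∧
          (∀ i i' : Fin h', i ≠ i' → Disjoint (dyadic (ℓ i) (idx i)) (dyadic (ℓ i') (idx i'))) ∧
          (⋃ i, dyadic (ℓ i) (idx i)) = Set.Ico (0 : ℝ) ((m : ℝ) / 2 ^ h) ∧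
          (∀ ℓ₀ : ℕ, (Finset.univ.filter fun i : Fin h' => ℓ i = ℓ₀).card ≤ 2) := by
  intro h _ m hm
  obtain ⟨S, f, hS, h1, h2, h3⟩ := prefix_aux h m hm
  have hc : S.card ≤ h := by simpa using Finset.card_le_card hS
  have hinj : ∀ i i' : Fin S.card, (S.equivFin.symm i : ℕ) = S.equivFin.symm i' → i = i' :=
    fun i i' hi => S.equivFin.symm.injective (Subtype.ext hi)
  refine ⟨S.card, by omega, fun i => S.equivFin.symm i, fun i => f (S.equivFin.symm i),
    ?_, ?_, ?_, ?_, ?_⟩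
  · intro i
    exact (Finset.mem_Icc.mp (hS (S.equivFin.symm i).2)).2
  · intro i
    exact h1 _ (S.equivFin.symm i).2
  · intro i i' hi
    exact h2 _ (S.equivFin.symm i).2 _ (S.equivFin.symm i').2 fun e => hi (hinj _ _ e)
  · rw [← h3, ← Set.iUnion_subtype (fun l => l ∈ S) (fun x => dyadic x.1 (f x.1))]
    exact S.equivFin.symm.surjective.iUnion_comp (fun x : S => dyadic x (f x))
  · intro l
    refine le_trans (Finset.card_le_one.mpr ?_) one_le_two
    intro a ha b hb
    simp only [Finset.mem_filter, Finset.mem_univ, true_and] at ha hb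
    exact hinj _ _ (ha.trans hb.symm)
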